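/- Let G be a diametrical graph on 2k vertices with diameter d, i.e., a connected graph in which every vertex v has a unique vertex v̄ with d_G(v, v̄) = diam(G) = d. Then the spectrum of the eccentricity matrix 𝓔(G) consists of the eigenvalue d with multiplicity k and the eigenvalue −d with multiplicity k; in particular, the 𝓔-eigenvalues of G are symmetric about the origin. -/

import Mathlib

open SimpleGraph Finset Matrix Polynomial

/-- The eccentricity of a vertex: the greatest distance from `u` to any vertex. -/
noncomputable def ecc {V : Type*} [Fintype V] (G : SimpleGraph V) (u : V) : ℕ :=
  Finset.univ.sup fun v => G.dist u v

/-- The diameter of a graph: the greatest distance between any pair of vertices. -/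
noncomputable def gdiam {V : Type*} [Fintype V] (G : SimpleGraph V) : ℕ :=
  Finset.univ.sup fun p : V × V => G.dist p.1 p.2

/-- The eccentricity matrix: `(u,v)` entry is `d(u,v)` if `d(u,v) = min (e u) (e v)`,
and `0` otherwise. -/
noncomputable def eccMatrix {V : Type*} [Fintype V] (G : SimpleGraph V) : Matrix V V ℝ :=
  Matrix.of fun u v =>
    if G.dist u v = min (ecc G u) (ecc G v) then (G.dist u v : ℝ) else 0

/-!
In a diametrical graph every eccentricity equals the diameter `d`, so `𝓔(G)` is `d` times the
permutation matrix of the antipodal involution and `𝓔(G)² = d² I`. For any matrix `A` with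
`A² = c² I`, multiplying `X I - A` by `X I + A` shows that the characteristic polynomial of `A`
divides `(X² - c²)ⁿ`; hence it splits with all its roots equal to `± c`. Since `𝓔(G)` has zero
diagonal, its trace vanishes, which forces the two signs to occur equally often.
-/

theorem eq_replicate_add_replicate_neg_of_sum_eq_zero {M : Type*} [AddCommGroup M]
    [IsAddTorsionFree M] {s : Multiset M} {k : ℕ} {c : M} (hcard : s.card = 2 * k)
    (hsum : s.sum = 0) (hs : ∀ x ∈ s, x = c ∨ x = -c) :
    s = Multiset.replicate k c + Multiset.replicate k (-c) := by
  have : DecidableEq M := Classical.decEq M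
  obtain ⟨a, b, rfl⟩ : ∃ a b, s = Multiset.replicate a c + Multiset.replicate b (-c) := by
    refine ⟨s.count c, (s.filter (¬ · = c)).card,
      (Multiset.filter_add_not (· = c) s).symm.trans ?_⟩
    rw [Multiset.filter_eq', add_right_inj, Multiset.eq_replicate]
    refine ⟨rfl, fun x hx => ?_⟩
    obtain ⟨hxs, hxc⟩ := Multiset.mem_filter.mp hx
    exact (hs x hxs).resolve_left hxc
  have hab : a + b = 2 * k := by simpa using hcard
  obtain rfl | hc := eq_or_ne c 0
  · rw [neg_zero, ← Multiset.replicate_add, ← Multiset.replicate_add, hab, two_mul]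
  · have hsmul : a • c = b • c := by
      simpa only [Multiset.sum_add, Multiset.sum_replicate, smul_neg, ← sub_eq_add_neg,
        sub_eq_zero] using hsum
    have heq : a = b := (IsAddLeftRegular.all c).nsmul_injective hc hsmul
    obtain ⟨rfl, rfl⟩ : a = k ∧ b = k := by omega
    rfl

theorem count_neg_replicate_add_replicate_neg {α : Type*} [DecidableEq α] [InvolutiveNeg α]
    (k : ℕ) (c x : α) :
    (Multiset.replicate k c + Multiset.replicate k (-c)).count (-x) =
      (Multiset.replicate k c + Multiset.replicate k (-c)).count x := by
  simp only [Multiset.count_add, Multiset.count_replicate, neg_eq_iff_eq_neg, neg_neg, add_comm]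

section SquareScalar

variable {n R : Type*} [Fintype n] [DecidableEq n] [CommRing R] {A : Matrix n n R}

theorem charpoly_mul_charpoly_neg_of_sq_eq_scalar {a : R} (hA : A ^ 2 = scalar n a) :
    A.charpoly * (-A).charpoly = (X ^ 2 - C a) ^ Fintype.card n := by
  have hmul : charmatrix A * charmatrix (-A) = scalar n (X ^ 2 - C a) := by
    have hcomm : Commute (scalar n (X : R[X])) (C.mapMatrix A) :=
      scalar_commute _ (fun _ => Commute.all _ _) _
    have hC : C.mapMatrix A ^ 2 = scalar n (C a) := by
      rw [← map_pow, hA, RingHom.mapMatrix_apply, scalar_apply, diagonal_map (map_zero C),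
        scalar_apply]
    rw [charmatrix, charmatrix, map_neg, sub_neg_eq_add, ← hcomm.mul_self_sub_mul_self_eq',
      ← pow_two, ← pow_two, hC, map_sub, map_pow]
  rw [charpoly, charpoly, ← det_mul, hmul, scalar_apply, det_diagonal, prod_const, card_univ]

variable {c : R}

theorem charpoly_dvd_of_sq_eq_scalar_sq (hA : A ^ 2 = scalar n (c ^ 2)) :
    A.charpoly ∣ ((X - C c) * (X + C c)) ^ Fintype.card n := by
  refine ⟨(-A).charpoly, ?_⟩
  rw [charpoly_mul_charpoly_neg_of_sq_eq_scalar hA, C_pow]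
  ring

variable [IsDomain R]

theorem splits_charpoly_of_sq_eq_scalar_sq (hA : A ^ 2 = scalar n (c ^ 2)) :
    A.charpoly.Splits :=
  (((Splits.X_sub_C c).mul (Splits.X_add_C c)).pow _).of_dvd
    (((monic_X_sub_C c).mul (monic_X_add_C c)).pow _).ne_zero
    (charpoly_dvd_of_sq_eq_scalar_sq hA)

theorem eq_or_eq_neg_of_mem_roots_charpoly (hA : A ^ 2 = scalar n (c ^ 2)) {x : R}
    (hx : x ∈ A.charpoly.roots) : x = c ∨ x = -c := by
  have hroot := (isRoot_of_mem_roots hx).dvd (charpoly_dvd_of_sq_eq_scalar_sq hA)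
  have hzero : (x - c) * (x + c) = 0 := by
    apply eq_zero_of_pow_eq_zero (n := Fintype.card n)
    simpa only [IsRoot.def, eval_pow, eval_mul, eval_sub, eval_add, eval_X, eval_C] using hroot
  exact (mul_eq_zero.mp hzero).imp sub_eq_zero.mp eq_neg_of_add_eq_zero_left

theorem roots_charpoly_of_sq_eq_scalar_sq_of_trace_eq_zero [CharZero R] {k : ℕ}
    (hcard : Fintype.card n = 2 * k) (hA : A ^ 2 = scalar n (c ^ 2)) (htr : A.trace = 0) :
    A.charpoly.roots = Multiset.replicate k c + Multiset.replicate k (-c) := by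
  have hsplits := splits_charpoly_of_sq_eq_scalar_sq hA
  refine eq_replicate_add_replicate_neg_of_sum_eq_zero ?_ ?_
    fun x hx => eq_or_eq_neg_of_mem_roots_charpoly hA hx
  · rw [← hsplits.natDegree_eq_card_roots, charpoly_natDegree_eq_dim, hcard]
  · rw [← trace_eq_sum_roots_charpoly_of_splits hsplits, htr]

end SquareScalar

section Eccentricity

variable {V : Type*} [Fintype V] (G : SimpleGraph V)

theorem dist_le_gdiam (u v : V) : G.dist u v ≤ gdiam G :=
  le_sup (f := fun p : V × V => G.dist p.1 p.2) (mem_univ (u, v))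

theorem trace_eccMatrix : (eccMatrix G).trace = 0 := by
  simp [trace, eccMatrix]

variable {G}

theorem ecc_eq_gdiam_of_dist_eq {u v : V} (h : G.dist u v = gdiam G) : ecc G u = gdiam G :=
  le_antisymm (Finset.sup_le fun w _ => dist_le_gdiam G u w)
    (h ▸ le_sup (f := fun w => G.dist u w) (mem_univ v))

end Eccentricity

/-- The condition that every vertex `v` has exactly one antipode, i.e. a unique vertex whose
distance from `v` is the diameter. A diametrical graph is a connected graph with this property. -/
def HasUniqueAntipodes {V : Type*} [Fintype V] (G : SimpleGraph V) : Prop :=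
  ∀ v : V, ∃! w : V, G.dist v w = gdiam G

namespace HasUniqueAntipodes

variable {V : Type*} [Fintype V] {G : SimpleGraph V}

/-- The antipode `v̄` of `v`: the unique vertex at distance `gdiam G` from `v`. -/
noncomputable def antipode (hG : HasUniqueAntipodes G) (v : V) : V :=
  (hG v).choose

theorem dist_eq_gdiam_iff (hG : HasUniqueAntipodes G) {u v : V} :
    G.dist u v = gdiam G ↔ hG.antipode u = v :=
  ⟨fun h => (hG u).unique (hG u).choose_spec.1 h, fun h => h ▸ (hG u).choose_spec.1⟩

theorem antipode_involutive (hG : HasUniqueAntipodes G) :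
    Function.Involutive hG.antipode := fun v => by
  rw [← hG.dist_eq_gdiam_iff, dist_comm, hG.dist_eq_gdiam_iff]

theorem ecc_eq_gdiam (hG : HasUniqueAntipodes G) (v : V) : ecc G v = gdiam G :=
  ecc_eq_gdiam_of_dist_eq (hG.dist_eq_gdiam_iff.mpr rfl)

variable [DecidableEq V]

theorem eccMatrix_eq_smul_permMatrix (hG : HasUniqueAntipodes G) :
    eccMatrix G = (gdiam G : ℝ) • hG.antipode_involutive.toPerm.permMatrix ℝ := by
  ext u v
  by_cases h : hG.antipode u = v
  · simp [eccMatrix, hG.ecc_eq_gdiam, hG.dist_eq_gdiam_iff.mpr h, h, PEquiv.toMatrix_apply]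
  · simp [eccMatrix, hG.ecc_eq_gdiam, hG.dist_eq_gdiam_iff, h, PEquiv.toMatrix_apply]

theorem eccMatrix_sq (hG : HasUniqueAntipodes G) :
    eccMatrix G ^ 2 = scalar V ((gdiam G : ℝ) ^ 2) := by
  have hinv : hG.antipode_involutive.toPerm * hG.antipode_involutive.toPerm = 1 :=
    Equiv.ext hG.antipode_involutive
  rw [hG.eccMatrix_eq_smul_permMatrix, _root_.smul_pow, pow_two (Equiv.Perm.permMatrix _ _),
    ← permMatrix_mul, hinv, permMatrix_one, smul_one_eq_diagonal, scalar_apply]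

theorem roots_charpoly_eccMatrix (hG : HasUniqueAntipodes G) {k : ℕ}
    (hcard : Fintype.card V = 2 * k) :
    (eccMatrix G).charpoly.roots =
      Multiset.replicate k (gdiam G : ℝ) + Multiset.replicate k (-(gdiam G : ℝ)) :=
  roots_charpoly_of_sq_eq_scalar_sq_of_trace_eq_zero hcard hG.eccMatrix_sq (trace_eccMatrix G)

end HasUniqueAntipodes

/-- For a diametrical graph `G` on `2k` vertices with diameter `d` (every vertex `v` has a
unique vertex at distance `d` from it), the spectrum of the eccentricity matrix consists of `d`
with multiplicity `k` and `-d` with multiplicity `k`; in particular it is symmetric about the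
origin. -/
theorem stmt18 {V : Type*} [Fintype V] [DecidableEq V] (G : SimpleGraph V) (k dd : ℕ)
    (hcard : Fintype.card V = 2*k) (hconn : G.Connected) (hdiam : gdiam G = dd)
    (hdia : ∀ v : V, ∃! w : V, G.dist v w = dd) :
    (eccMatrix G).charpoly.roots
        = Multiset.replicate k (dd : ℝ) + Multiset.replicate k (-(dd : ℝ)) ∧
    ∀ x : ℝ, (eccMatrix G).charpoly.roots.count x
        = (eccMatrix G).charpoly.roots.count (-x) := by
  subst hdiam
  have hG : HasUniqueAntipodes G := hdia
  rw [hG.roots_charpoly_eccMatrix hcard]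
  exact ⟨rfl, fun x => (count_neg_replicate_add_replicate_neg k _ x).symm⟩
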